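/- arXiv:2109.01795 — 3 statements merged into one kernel-verified Lean document; each statement's English description precedes it below -/
import Mathlib

section
/- For any finite discounted stochastic game, a strategy profile π is a Markov perfect equilibrium if and only if it is a fixed point of the map f, i.e., f(π) = π. -/
/-!
The value `V` of a profile is the fixed point of its Bellman operator `T`, and comparison at a
state where a difference of two vectors is largest shows that it lies above every subsolution
`v ≤ T v` and below every supersolution `T v ≤ v`. Against fixed opponents, `T v s` is affine in the
mixed action of agent `i` at `s`, so it is the average of the values of the pure actions there.
The Bellman operator of a deviation at a single state changes the value of the original profile at
that state only, so the deviation improves the value there if and only if it improves the one-step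
value; if no such deviation does, the value is a supersolution for every deviating strategy. Hence
`π` is an equilibrium if and only if all the gains `D` vanish.

Vanishing gains clearly make `π` a fixed point of `f`. Conversely, an average is at least one of the
averaged values that carry positive weight, so some action `b` in the support of `π i s` has no
gain; at `b` the equation `f π = π` reads `π i s b / (1 + ∑ D) = π i s b`, which forces `∑ D = 0`.
-/

open Finset

/-- A finite discounted stochastic game with `n` agents, `S` states and
action counts `A i` for each agent `i`. -/
structure SG (n S : ℕ) (A : Fin n → ℕ) where
  P : Fin S → (∀ i, Fin (A i)) → Fin S → ℝ
  r : Fin n → Fin S → (∀ i, Fin (A i)) → ℝ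
  Rmax : ℝ
  γ : ℝ
  P_nonneg : ∀ s a s', 0 ≤ P s a s'
  P_sum_one : ∀ s a, ∑ s', P s a s' = 1
  r_nonneg : ∀ i s a, 0 ≤ r i s a
  r_le_Rmax : ∀ i s a, r i s a ≤ Rmax
  γ_nonneg : 0 ≤ γ
  γ_lt_one : γ < 1

namespace SG

variable {n S : ℕ} {A : Fin n → ℕ}

/-- A (behavioral) strategy profile: agent `i` plays at state `s` the distribution
`π i s` on its actions. -/
abbrev Profile (n S : ℕ) (A : Fin n → ℕ) := ∀ i : Fin n, Fin S → Fin (A i) → ℝ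

/-- `π` is a genuine strategy profile: each `π i s` is a probability distribution. -/
def IsProfile (π : Profile n S A) : Prop :=
  (∀ i s a, 0 ≤ π i s a) ∧ ∀ i s, ∑ a, π i s a = 1

/-- `A_max`, the largest number of actions of any agent. -/
def Amax (A : Fin n → ℕ) : ℕ := Finset.univ.sup A

/-- Probability of the joint action `a` at state `s` under profile `π`. -/
def jointProb (π : Profile n S A) (s : Fin S) (a : ∀ i, Fin (A i)) : ℝ :=
  ∏ i, π i s (a i)

/-- The state-transition matrix `P^π` induced by the profile `π`. -/
noncomputable def Pmat (g : SG n S A) (π : Profile n S A) : Matrix (Fin S) (Fin S) ℝ :=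
  fun s s' => ∑ a, jointProb π s a * g.P s a s'

/-- Expected one-step reward `r^{i,π}(s)` of agent `i` at state `s` under `π`. -/
noncomputable def rvec (g : SG n S A) (π : Profile n S A) (i : Fin n) (s : Fin S) : ℝ :=
  ∑ a, jointProb π s a * g.r i s a

/-- The value function `V^{π^i,π^{-i}}` of agent `i` under profile `π`: the unique
solution of the Bellman equation `V = r^{i,π} + γ P^π V`, i.e. `(I − γP^π)⁻¹ r^{i,π}`. -/
noncomputable def V (g : SG n S A) (π : Profile n S A) (i : Fin n) : Fin S → ℝ :=
  Matrix.mulVec (1 - g.γ • g.Pmat π)⁻¹ (g.rvec π i)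

/-- The profile obtained from `π` by letting agent `i` play the pure action `a`
at state `s` (and `π i` at every other state). -/
def devProfile (π : Profile n S A) (i : Fin n) (s : Fin S) (a : Fin (A i)) : Profile n S A :=
  Function.update π i (fun t b => if t = s then (if b = a then (1 : ℝ) else 0) else π i t b)

/-- The one-step-deviation value `V^{π^i,π^{-i}}_{π^i(s,a)=1}(s)`. -/
noncomputable def Vdev (g : SG n S A) (π : Profile n S A) (i : Fin n) (s : Fin S)
    (a : Fin (A i)) : ℝ :=
  g.V (devProfile π i s a) i s

/-- `D^{π}_{a}(s) = max(0, V^{π^i,π^{-i}}_{π^i(s,a)=1}(s) − V^{π^i,π^{-i}}(s))`. -/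
noncomputable def D (g : SG n S A) (π : Profile n S A) (i : Fin n) (s : Fin S)
    (a : Fin (A i)) : ℝ :=
  max 0 (g.Vdev π i s a - g.V π i s)

/-- Nash's improvement map `f` on strategy profiles. -/
noncomputable def f (g : SG n S A) (π : Profile n S A) : Profile n S A :=
  fun i s a => (π i s a + g.D π i s a) / (1 + ∑ b, g.D π i s b)

/-- `π` is a Markov perfect equilibrium: no agent can improve its value at any state
by unilaterally switching to another behavioral strategy. -/
def IsMPE (g : SG n S A) (π : Profile n S A) : Prop :=
  ∀ (s : Fin S) (i : Fin n) (σ : Fin S → Fin (A i) → ℝ),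
    ((∀ t b, 0 ≤ σ t b) ∧ ∀ t, ∑ b, σ t b = 1) →
    g.V (Function.update π i σ) i s ≤ g.V π i s

/-- `π` is an `ε`-approximate Markov perfect equilibrium. -/
def IsApproxMPE (g : SG n S A) (π : Profile n S A) (ε : ℝ) : Prop :=
  ∀ (s : Fin S) (i : Fin n) (σ : Fin S → Fin (A i) → ℝ),
    ((∀ t b, 0 ≤ σ t b) ∧ ∀ t, ∑ b, σ t b = 1) →
    g.V (Function.update π i σ) i s - ε ≤ g.V π i s

end SG

open Matrix

section StdSimplex

variable {R ι : Type*} [Fintype ι]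

lemma dotProduct_le_of_mem_stdSimplex [Semiring R] [PartialOrder R] [IsOrderedRing R]
    {w : ι → R} (hw : w ∈ stdSimplex R ι) {x : ι → R} {c : R}
    (hx : ∀ j, x j ≤ c) : w ⬝ᵥ x ≤ c :=
  calc w ⬝ᵥ x ≤ ∑ j, w j * c :=
        sum_le_sum fun j _ => mul_le_mul_of_nonneg_left (hx j) (hw.1 j)
    _ = c := by rw [← sum_mul, hw.2, one_mul]

lemma exists_pos_of_mem_stdSimplex [Semiring R] [LinearOrder R] [IsStrictOrderedRing R]
    {w : ι → R} (hw : w ∈ stdSimplex R ι) : ∃ j, 0 < w j := by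
  have hsum : ∑ _j : ι, (0 : R) < ∑ j, w j := by simp [hw.2]
  simpa using exists_lt_of_sum_lt hsum

lemma exists_pos_and_le_dotProduct_of_mem_stdSimplex [Semiring R] [LinearOrder R]
    [IsStrictOrderedRing R] {w : ι → R} (hw : w ∈ stdSimplex R ι) (x : ι → R) :
    ∃ j, 0 < w j ∧ x j ≤ w ⬝ᵥ x := by
  by_contra! hlt
  obtain ⟨j, hj⟩ := exists_pos_of_mem_stdSimplex hw
  have hle (k : ι) : w k * (w ⬝ᵥ x) ≤ w k * x k := by
    rcases (hw.1 k).eq_or_lt with hk | hk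
    · simp [← hk]
    · exact mul_le_mul_of_nonneg_left (hlt k hk).le hk.le
  have : w ⬝ᵥ x < w ⬝ᵥ x :=
    calc w ⬝ᵥ x = ∑ k, w k * (w ⬝ᵥ x) := by rw [← sum_mul, hw.2, one_mul]
      _ < ∑ k, w k * x k :=
        sum_lt_sum (fun k _ => hle k) ⟨j, mem_univ j, mul_lt_mul_of_pos_left (hlt j hj) hj⟩
  exact this.false

lemma prod_apply_mem_stdSimplex [DecidableEq ι] [CommSemiring R] [PartialOrder R]
    [IsOrderedRing R] {α : ι → Type*} [∀ i, Fintype (α i)]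
    {p : ∀ i, α i → R} (hp : ∀ i, p i ∈ stdSimplex R (α i)) :
    (fun a : ∀ i, α i => ∏ i, p i (a i)) ∈ stdSimplex R (∀ i, α i) :=
  ⟨fun a => prod_nonneg fun i _ => (hp i).1 (a i), by simp [← Fintype.prod_sum, (hp _).2]⟩

end StdSimplex

section Discounted

variable {R m : Type*} [Fintype m] [DecidableEq m]

lemma mem_rowStochastic_iff_mem_stdSimplex [Semiring R] [PartialOrder R] [IsOrderedRing R]
    {M : Matrix m m R} : M ∈ rowStochastic R m ↔ ∀ i, M i ∈ stdSimplex R m :=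
  mem_rowStochastic_iff_sum.trans forall_and.symm

variable [CommRing R] [LinearOrder R] [IsStrictOrderedRing R] {M : Matrix m m R} {γ : R}

lemma nonpos_of_le_smul_mulVec (hM : M ∈ rowStochastic R m) (hγ₀ : 0 ≤ γ) (hγ₁ : γ < 1)
    {x : m → R} (hx : x ≤ γ • M *ᵥ x) : x ≤ 0 := by
  intro i
  have : Nonempty m := ⟨i⟩
  obtain ⟨k, hk⟩ := Finite.exists_max x
  have hmax : x k ≤ γ * x k :=
    calc x k ≤ γ * (M k ⬝ᵥ x) := hx k
      _ ≤ γ * x k := mul_le_mul_of_nonneg_left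
        (dotProduct_le_of_mem_stdSimplex (mem_rowStochastic_iff_mem_stdSimplex.1 hM k) hk) hγ₀
  have hmul : (1 - γ) * x k ≤ 0 := by linarith
  exact (hk i).trans (nonpos_of_mul_nonpos_right hmul (sub_pos.2 hγ₁))

lemma le_of_le_add_smul_mulVec_of_add_smul_mulVec_le (hM : M ∈ rowStochastic R m)
    (hγ₀ : 0 ≤ γ) (hγ₁ : γ < 1) {c x y : m → R} (hx : x ≤ c + γ • M *ᵥ x)
    (hy : c + γ • M *ᵥ y ≤ y) : x ≤ y := by
  refine sub_nonpos.1 (nonpos_of_le_smul_mulVec hM hγ₀ hγ₁ ?_)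
  calc x - y ≤ (c + γ • M *ᵥ x) - (c + γ • M *ᵥ y) := sub_le_sub hx hy
    _ = γ • M *ᵥ (x - y) := by rw [add_sub_add_left_eq_sub, mulVec_sub, smul_sub]

lemma isUnit_one_sub_smul_of_mem_rowStochastic {𝕜 : Type*} [Field 𝕜] [LinearOrder 𝕜]
    [IsStrictOrderedRing 𝕜] {M : Matrix m m 𝕜} {γ : 𝕜} (hM : M ∈ rowStochastic 𝕜 m) (hγ₀ : 0 ≤ γ)
    (hγ₁ : γ < 1) : IsUnit (1 - γ • M) := by
  rw [← mulVec_injective_iff_isUnit]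
  have solution (z : m → 𝕜) : z = (1 - γ • M) *ᵥ z + γ • M *ᵥ z := by
    rw [sub_mulVec, one_mulVec, smul_mulVec, sub_add_cancel]
  intro x y hxy
  have hy := solution y
  rw [← hxy] at hy
  exact le_antisymm
    (le_of_le_add_smul_mulVec_of_add_smul_mulVec_le hM hγ₀ hγ₁ (solution x).le hy.ge)
    (le_of_le_add_smul_mulVec_of_add_smul_mulVec_le hM hγ₀ hγ₁ hy.le (solution x).ge)

end Discounted

namespace SG

variable {n S : ℕ} {A : Fin n → ℕ} (g : SG n S A) {π : Profile n S A}

lemma isProfile_iff_mem_stdSimplex :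
    IsProfile π ↔ ∀ i s, π i s ∈ stdSimplex ℝ (Fin (A i)) :=
  ⟨fun h i s => ⟨h.1 i s, h.2 i s⟩, fun h => ⟨fun i s => (h i s).1, fun i s => (h i s).2⟩⟩

lemma IsProfile.update (hπ : IsProfile π) {i : Fin n} {σ : Fin S → Fin (A i) → ℝ}
    (hσ : ∀ s, σ s ∈ stdSimplex ℝ (Fin (A i))) : IsProfile (Function.update π i σ) := by
  rw [isProfile_iff_mem_stdSimplex] at hπ ⊢
  exact (Function.forall_update_iff π fun j τ => ∀ s, τ s ∈ stdSimplex ℝ (Fin (A j))).2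
    ⟨hσ, fun j _ => hπ j⟩

lemma devProfile_eq_update (π : Profile n S A) (i : Fin n) (s : Fin S) (b : Fin (A i)) :
    devProfile π i s b = Function.update π i (Function.update (π i) s (Pi.single b 1)) := by
  unfold devProfile
  congr with t c
  rcases eq_or_ne t s with rfl | ht
  · simp [Pi.single_apply]
  · simp [ht]

lemma IsProfile.update_single_mem_stdSimplex (hπ : IsProfile π) (i : Fin n) (s : Fin S)
    (b : Fin (A i)) (t : Fin S) :
    Function.update (π i) s (Pi.single b 1) t ∈ stdSimplex ℝ (Fin (A i)) :=
  (Function.forall_update_iff (π i) fun _ p => p ∈ stdSimplex ℝ (Fin (A i))).2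
    ⟨single_mem_stdSimplex ℝ b, fun t _ => isProfile_iff_mem_stdSimplex.1 hπ i t⟩ t

lemma IsProfile.devProfile (hπ : IsProfile π) (i : Fin n) (s : Fin S) (b : Fin (A i)) :
    IsProfile (devProfile π i s b) := by
  rw [devProfile_eq_update]
  exact hπ.update (hπ.update_single_mem_stdSimplex i s b)

lemma jointProb_mem_stdSimplex (hπ : IsProfile π) (s : Fin S) :
    jointProb π s ∈ stdSimplex ℝ (∀ i, Fin (A i)) :=
  prod_apply_mem_stdSimplex fun i => isProfile_iff_mem_stdSimplex.1 hπ i s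

lemma jointProb_update_apply (π : Profile n S A) (i : Fin n) (σ : Fin S → Fin (A i) → ℝ)
    (s : Fin S) (a : ∀ j, Fin (A j)) :
    jointProb (Function.update π i σ) s a = σ s (a i) * ∏ j ∈ univ.erase i, π j s (a j) := by
  rw [jointProb, ← mul_prod_erase _ _ (mem_univ i), Function.update_self]
  congr 1
  exact prod_congr rfl fun j hj => by rw [Function.update_of_ne (ne_of_mem_erase hj)]

lemma jointProb_update (π : Profile n S A) (i : Fin n) (σ : Fin S → Fin (A i) → ℝ) (s : Fin S) :
    jointProb (Function.update π i σ) s = ∑ b, σ s b • jointProb (devProfile π i s b) s := by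
  ext a
  simp [devProfile_eq_update, jointProb_update_apply, Pi.single_apply]

lemma Pmat_mem_rowStochastic (hπ : IsProfile π) : g.Pmat π ∈ rowStochastic ℝ (Fin S) := by
  refine mem_rowStochastic_iff_sum.2 ⟨fun s s' => ?_, fun s => ?_⟩
  · exact sum_nonneg fun a _ => mul_nonneg ((jointProb_mem_stdSimplex hπ s).1 a) (g.P_nonneg s a s')
  · simp only [Pmat]
    rw [sum_comm]
    simp only [← mul_sum, g.P_sum_one, mul_one, (jointProb_mem_stdSimplex hπ s).2]

/-- The Bellman operator `v ↦ r^{i,π} + γ P^π v`, whose fixed point is the value function. -/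
noncomputable def bellman (π : Profile n S A) (i : Fin n) (v : Fin S → ℝ) : Fin S → ℝ :=
  g.rvec π i + g.γ • g.Pmat π *ᵥ v

/-- The payoffs to agent `i` in Shapley's auxiliary one-shot game at state `s`, in which `v` is
the continuation value. -/
noncomputable def stagePayoff (i : Fin n) (v : Fin S → ℝ) (s : Fin S) : (∀ j, Fin (A j)) → ℝ :=
  g.r i s + g.γ • of (g.P s) *ᵥ v

/-- The Q-value: what agent `i` expects from the action `b` at state `s` when the others follow `π`
and `v` is the continuation value. It does not depend on `π i`. -/
noncomputable def actionValue (π : Profile n S A) (i : Fin n) (v : Fin S → ℝ) (s : Fin S)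
    (b : Fin (A i)) : ℝ :=
  g.bellman (devProfile π i s b) i v s

lemma bellman_V (hπ : IsProfile π) (i : Fin n) : g.bellman π i (g.V π i) = g.V π i := by
  have hdet := (isUnit_iff_isUnit_det _).1
    (isUnit_one_sub_smul_of_mem_rowStochastic (g.Pmat_mem_rowStochastic hπ) g.γ_nonneg g.γ_lt_one)
  have hsolve : (1 - g.γ • g.Pmat π) *ᵥ g.V π i = g.rvec π i := by
    rw [V, mulVec_mulVec, mul_nonsing_inv _ hdet, one_mulVec]
  rw [bellman, ← hsolve, sub_mulVec, one_mulVec, smul_mulVec, sub_add_cancel]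

lemma V_le_of_bellman_le (hπ : IsProfile π) {i : Fin n} {v : Fin S → ℝ}
    (hv : g.bellman π i v ≤ v) : g.V π i ≤ v :=
  le_of_le_add_smul_mulVec_of_add_smul_mulVec_le (g.Pmat_mem_rowStochastic hπ) g.γ_nonneg g.γ_lt_one
    (g.bellman_V hπ i).ge hv

lemma le_V_of_le_bellman (hπ : IsProfile π) {i : Fin n} {v : Fin S → ℝ}
    (hv : v ≤ g.bellman π i v) : v ≤ g.V π i :=
  le_of_le_add_smul_mulVec_of_add_smul_mulVec_le (g.Pmat_mem_rowStochastic hπ) g.γ_nonneg g.γ_lt_one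
    hv (g.bellman_V hπ i).le

lemma monotone_bellman (hπ : IsProfile π) (i : Fin n) : Monotone (g.bellman π i) := by
  intro v w hvw
  refine add_le_add_right (smul_le_smul_of_nonneg_left (fun s => ?_) g.γ_nonneg) _
  exact dotProduct_le_dotProduct_of_nonneg_left hvw ((g.Pmat_mem_rowStochastic hπ).1 s)

lemma bellman_le_V_of_le_bellman (hπ : IsProfile π) {i : Fin n} {v : Fin S → ℝ}
    (hv : v ≤ g.bellman π i v) : g.bellman π i v ≤ g.V π i :=
  calc g.bellman π i v ≤ g.bellman π i (g.V π i) :=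
        g.monotone_bellman hπ i (g.le_V_of_le_bellman hπ hv)
    _ = g.V π i := g.bellman_V hπ i

lemma bellman_apply (π : Profile n S A) (i : Fin n) (v : Fin S → ℝ) (s : Fin S) :
    g.bellman π i v s = jointProb π s ⬝ᵥ g.stagePayoff i v s := by
  rw [stagePayoff, dotProduct_add, dotProduct_smul, dotProduct_mulVec]
  rfl

lemma bellman_update_apply (π : Profile n S A) (i : Fin n) (σ : Fin S → Fin (A i) → ℝ)
    (v : Fin S → ℝ) (s : Fin S) :
    g.bellman (Function.update π i σ) i v s = σ s ⬝ᵥ g.actionValue π i v s := by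
  simp only [bellman_apply, jointProb_update, sum_dotProduct, smul_dotProduct, smul_eq_mul]
  simp only [dotProduct, actionValue, bellman_apply]

lemma bellman_eq_dotProduct_actionValue (π : Profile n S A) (i : Fin n) (v : Fin S → ℝ)
    (s : Fin S) : g.bellman π i v s = π i s ⬝ᵥ g.actionValue π i v s := by
  rw [← bellman_update_apply, Function.update_eq_self]

lemma bellman_devProfile_of_ne (π : Profile n S A) (i : Fin n) {s t : Fin S} (hts : t ≠ s)
    (b : Fin (A i)) (v : Fin S → ℝ) :
    g.bellman (devProfile π i s b) i v t = g.bellman π i v t := by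
  rw [devProfile_eq_update, bellman_update_apply, Function.update_of_ne hts,
    ← bellman_eq_dotProduct_actionValue]

lemma bellman_devProfile_V (hπ : IsProfile π) (i : Fin n) (s : Fin S) (b : Fin (A i)) :
    g.bellman (devProfile π i s b) i (g.V π i) =
      Function.update (g.V π i) s (g.actionValue π i (g.V π i) s b) := by
  refine Function.eq_update_iff.2 ⟨rfl, fun t hts => ?_⟩
  rw [g.bellman_devProfile_of_ne π i hts, g.bellman_V hπ]

theorem Vdev_le_V_iff (hπ : IsProfile π) (i : Fin n) (s : Fin S) (b : Fin (A i)) :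
    g.Vdev π i s b ≤ g.V π i s ↔ g.actionValue π i (g.V π i) s b ≤ g.V π i s := by
  have hdev := hπ.devProfile i s b
  constructor
  · contrapose!
    intro hlt
    have hsub : g.V π i ≤ g.bellman (devProfile π i s b) i (g.V π i) := by
      rw [g.bellman_devProfile_V hπ]
      exact le_update_self_iff.2 hlt.le
    exact hlt.trans_le (g.bellman_le_V_of_le_bellman hdev hsub s)
  · intro hle
    have hsuper : g.bellman (devProfile π i s b) i (g.V π i) ≤ g.V π i := by
      rw [g.bellman_devProfile_V hπ]
      exact update_le_self_iff.2 hle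
    exact g.V_le_of_bellman_le hdev hsuper s

lemma V_update_le (hπ : IsProfile π) {i : Fin n}
    (hQ : ∀ s b, g.actionValue π i (g.V π i) s b ≤ g.V π i s) {σ : Fin S → Fin (A i) → ℝ}
    (hσ : ∀ s, σ s ∈ stdSimplex ℝ (Fin (A i))) : g.V (Function.update π i σ) i ≤ g.V π i := by
  refine g.V_le_of_bellman_le (hπ.update hσ) fun s => ?_
  rw [bellman_update_apply]
  exact dotProduct_le_of_mem_stdSimplex (hσ s) (hQ s)

lemma D_nonneg (π : Profile n S A) (i : Fin n) (s : Fin S) : 0 ≤ g.D π i s :=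
  fun _ => le_max_left _ _

lemma D_eq_zero_iff_Vdev_le (π : Profile n S A) (i : Fin n) (s : Fin S) (b : Fin (A i)) :
    g.D π i s b = 0 ↔ g.Vdev π i s b ≤ g.V π i s := by
  rw [D, max_eq_left_iff, sub_nonpos]

lemma D_eq_zero_iff_actionValue_le (hπ : IsProfile π) (i : Fin n) (s : Fin S) (b : Fin (A i)) :
    g.D π i s b = 0 ↔ g.actionValue π i (g.V π i) s b ≤ g.V π i s := by
  rw [D_eq_zero_iff_Vdev_le, g.Vdev_le_V_iff hπ]

lemma exists_pos_and_D_eq_zero (hπ : IsProfile π) (i : Fin n) (s : Fin S) :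
    ∃ b, 0 < π i s b ∧ g.D π i s b = 0 := by
  obtain ⟨b, hb, hle⟩ := exists_pos_and_le_dotProduct_of_mem_stdSimplex
    (isProfile_iff_mem_stdSimplex.1 hπ i s) (g.actionValue π i (g.V π i) s)
  rw [← bellman_eq_dotProduct_actionValue, g.bellman_V hπ] at hle
  exact ⟨b, hb, (g.D_eq_zero_iff_actionValue_le hπ i s b).2 hle⟩

theorem isMPE_iff_D_eq_zero (hπ : IsProfile π) : g.IsMPE π ↔ ∀ i s, g.D π i s = 0 := by
  constructor
  · intro hMPE i s
    ext b
    refine (g.D_eq_zero_iff_Vdev_le π i s b).2 ?_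
    rw [Vdev, devProfile_eq_update]
    exact hMPE s i _ (forall_and.1 (hπ.update_single_mem_stdSimplex i s b))
  · intro hD s i σ hσ
    have hQ (t : Fin S) (b : Fin (A i)) : g.actionValue π i (g.V π i) t b ≤ g.V π i t :=
      (g.D_eq_zero_iff_actionValue_le hπ i t b).1 (congrFun (hD i t) b)
    exact g.V_update_le hπ hQ (forall_and.2 hσ) s

theorem f_eq_self_iff_D_eq_zero (hπ : IsProfile π) : g.f π = π ↔ ∀ i s, g.D π i s = 0 := by
  constructor
  · intro hfix i s
    obtain ⟨b, hb, hDb⟩ := g.exists_pos_and_D_eq_zero hπ i s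
    have hdiv : π i s b / (1 + ∑ c, g.D π i s c) = π i s b := by
      simpa only [f, hDb, add_zero] using congrFun₃ hfix i s b
    have hsum : ∑ c, g.D π i s c = 0 := by
      rwa [div_eq_mul_inv, mul_eq_left₀ hb.ne', inv_eq_one, add_eq_left] at hdiv
    exact (Fintype.sum_eq_zero_iff_of_nonneg (g.D_nonneg π i s)).1 hsum
  · intro hD
    funext i s b
    simp [f, hD]

end SG

open SG in
/-- `π` is a Markov perfect equilibrium iff it is a fixed point of `f`. -/
theorem isMPE_iff_isFixedPt {n S : ℕ} {A : Fin n → ℕ} (g : SG n S A)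
    (π : Profile n S A) (hπ : IsProfile π) :
    g.IsMPE π ↔ g.f π = π :=
  (g.isMPE_iff_D_eq_zero hπ).trans (g.f_eq_self_iff_D_eq_zero hπ).symm
end

section
/- Let ε > 0 and let π be a (not necessarily deterministic) stationary policy of a finite discounted Markov decision process. If for each state s and each action a, max(0, V^π_{π(s,a)=1}(s) − V^π(s)) ≤ ε, where V^π_{π(s,a)=1}(s) is the value at s of the policy that plays a deterministically at s and π elsewhere, then for every state s the optimal value V*(s) satisfies V*(s) − V^π(s) ≤ ε/(1−γ), i.e., π is an ε/(1−γ)-approximately optimal policy. -/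
/-!
Write `Q(s,a) = r(s,a) + γ ∑ P(s'|s,a) V^π(s')`. Everything rests on a maximum principle: if `M` is
row-stochastic and `v ≤ c + γ M v`, then evaluating at a maximiser of `v` gives `v ≤ c / (1 - γ)`.

With `c = 0` this says that `I - γ M` reflects the order; in particular it is injective, hence
invertible, and a function lying below its own Bellman backup under a policy lies below the value
of that policy.

If `V^π(s) ≤ Q(s,a)`, then `V^π` lies below its backup under the policy deviating to `a` at `s`,
hence below the value `V^dev` of that policy. Backing up once more at `s` gives
`Q(s,a) ≤ V^dev(s)`. So the hypothesis on deviations forces `Q(s,a) ≤ V^π(s) + ε` for all `s`, `a`.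

Choosing an action attaining the maximum in the optimality equation at each state, one sees that
`V* - V^π` is at most `ε` plus `γ` times an average of itself, and the principle with `c = ε`
concludes.
-/

open Finset

/-- A finite discounted Markov decision process with `S` states and `A` actions. -/
structure MDP (S A : ℕ) where
  P : Fin S → Fin A → Fin S → ℝ
  r : Fin S → Fin A → ℝ
  Rmax : ℝ
  γ : ℝ
  P_nonneg : ∀ s a s', 0 ≤ P s a s'
  P_sum_one : ∀ s a, ∑ s', P s a s' = 1
  r_nonneg : ∀ s a, 0 ≤ r s a
  r_le_Rmax : ∀ s a, r s a ≤ Rmax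
  γ_nonneg : 0 ≤ γ
  γ_lt_one : γ < 1

namespace MDP

variable {S A : ℕ}

/-- A stationary (not necessarily deterministic) policy. -/
def IsPolicy (π : Fin S → Fin A → ℝ) : Prop :=
  (∀ s a, 0 ≤ π s a) ∧ ∀ s, ∑ a, π s a = 1

/-- The state-transition matrix induced by the policy `π`. -/
noncomputable def Pmat (m : MDP S A) (π : Fin S → Fin A → ℝ) : Matrix (Fin S) (Fin S) ℝ :=
  fun s s' => ∑ a, π s a * m.P s a s'

/-- The expected one-step reward under `π`. -/
noncomputable def rvec (m : MDP S A) (π : Fin S → Fin A → ℝ) (s : Fin S) : ℝ :=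
  ∑ a, π s a * m.r s a

/-- The value function `V^π`: the unique solution of the Bellman equation
`V = r^π + γP^πV`, i.e. `(I − γP^π)⁻¹ r^π`. -/
noncomputable def V (m : MDP S A) (π : Fin S → Fin A → ℝ) : Fin S → ℝ :=
  Matrix.mulVec (1 - m.γ • m.Pmat π)⁻¹ (m.rvec π)

/-- The policy that plays `a` deterministically at `s` and `π` elsewhere. -/
def devPolicy (π : Fin S → Fin A → ℝ) (s : Fin S) (a : Fin A) : Fin S → Fin A → ℝ :=
  fun t b => if t = s then (if b = a then 1 else 0) else π t b

section RowStochastic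

open Matrix

variable {R K n : Type*} [Fintype n] [DecidableEq n]

lemma one_sub_smul_mulVec_apply [Ring R] (M : Matrix n n R) (γ : R) (v : n → R) (i : n) :
    ((1 - γ • M) *ᵥ v) i = v i - γ * (M *ᵥ v) i := by
  simp only [sub_mulVec, one_mulVec, smul_mulVec, Pi.sub_apply, Pi.smul_apply, smul_eq_mul]

lemma mulVec_apply_le_of_forall_le [Semiring R] [PartialOrder R] [IsOrderedRing R]
    {M : Matrix n n R} (hM : M ∈ rowStochastic R n) {v : n → R} {b : R}
    (hv : ∀ i, v i ≤ b) (i : n) : (M *ᵥ v) i ≤ b :=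
  calc ∑ j, M i j * v j ≤ ∑ j, M i j * b :=
        sum_le_sum fun j _ => mul_le_mul_of_nonneg_left (hv j) (nonneg_of_mem_rowStochastic hM)
    _ = b := by rw [← sum_mul, sum_row_of_mem_rowStochastic hM, one_mul]

variable [Field K] [LinearOrder K] [IsStrictOrderedRing K] {M : Matrix n n K} {γ : K}

lemma le_div_one_sub_of_le_add_mul_mulVec (hM : M ∈ rowStochastic K n) (hγ₀ : 0 ≤ γ) (hγ₁ : γ < 1)
    {v : n → K} {c : K} (hv : ∀ i, v i ≤ c + γ * (M *ᵥ v) i) (i : n) : v i ≤ c / (1 - γ) := by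
  have : Nonempty n := ⟨i⟩
  obtain ⟨x, hx⟩ := Finite.exists_max v
  have hvx : v x ≤ c + γ * v x :=
    (hv x).trans (by gcongr; exact mulVec_apply_le_of_forall_le hM hx x)
  refine (hx i).trans ?_
  rw [le_div_iff₀ (sub_pos.2 hγ₁)]
  linarith

lemma le_of_one_sub_smul_mulVec_le (hM : M ∈ rowStochastic K n) (hγ₀ : 0 ≤ γ) (hγ₁ : γ < 1)
    {v w : n → K} (h : (1 - γ • M) *ᵥ v ≤ (1 - γ • M) *ᵥ w) : v ≤ w := by
  intro i
  have hsub : ∀ j, (v - w) j ≤ 0 + γ * (M *ᵥ (v - w)) j := fun j => by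
    have hj : ((1 - γ • M) *ᵥ (v - w)) j ≤ 0 := by
      rw [mulVec_sub]
      exact sub_nonpos.2 (h j)
    rw [one_sub_smul_mulVec_apply] at hj
    linarith
  have hi := le_div_one_sub_of_le_add_mul_mulVec hM hγ₀ hγ₁ hsub i
  rwa [zero_div, Pi.sub_apply, sub_nonpos] at hi

lemma isUnit_one_sub_smul (hM : M ∈ rowStochastic K n) (hγ₀ : 0 ≤ γ) (hγ₁ : γ < 1) :
    IsUnit (1 - γ • M) :=
  mulVec_injective_iff_isUnit.1 fun _ _ h =>
    (le_of_one_sub_smul_mulVec_le hM hγ₀ hγ₁ h.le).antisymm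
      (le_of_one_sub_smul_mulVec_le hM hγ₀ hγ₁ h.ge)

end RowStochastic

section PolicyValue

open Matrix

variable {m : MDP S A} {π : Fin S → Fin A → ℝ}

/-- The expected return of playing `a` once at `s` and then collecting the continuation value `U`.
For `U = V^π` this is the action-value function `Q^π`. -/
noncomputable def actionValue (m : MDP S A) (U : Fin S → ℝ) (s : Fin S) (a : Fin A) : ℝ :=
  m.r s a + m.γ * ∑ t, m.P s a t * U t

lemma actionValue_mono (m : MDP S A) (s : Fin S) (a : Fin A) :
    Monotone fun U => m.actionValue U s a := fun _ _ h =>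
  add_le_add_right (mul_le_mul_of_nonneg_left
    (sum_le_sum fun t _ => mul_le_mul_of_nonneg_left (h t) (m.P_nonneg s a t)) m.γ_nonneg) _

lemma actionValue_sub_actionValue (m : MDP S A) (U W : Fin S → ℝ) (s : Fin S) (a : Fin A) :
    m.actionValue U s a - m.actionValue W s a = m.γ * ∑ t, m.P s a t * (U t - W t) := by
  simp only [actionValue, mul_sub, sum_sub_distrib]
  ring

lemma Pmat_mem_rowStochastic (m : MDP S A) (hπ : IsPolicy π) :
    m.Pmat π ∈ rowStochastic ℝ (Fin S) := by
  refine mem_rowStochastic_iff_sum.2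
    ⟨fun s t => sum_nonneg fun a _ => mul_nonneg (hπ.1 s a) (m.P_nonneg s a t), fun s => ?_⟩
  simp only [Pmat]
  rw [sum_comm]
  simp only [← mul_sum, m.P_sum_one, mul_one, hπ.2 s]

lemma sum_mul_actionValue (m : MDP S A) (π : Fin S → Fin A → ℝ) (U : Fin S → ℝ) (s : Fin S) :
    ∑ a, π s a * m.actionValue U s a = m.rvec π s + m.γ * (m.Pmat π *ᵥ U) s := by
  have hP : (m.Pmat π *ᵥ U) s = ∑ a, π s a * ∑ t, m.P s a t * U t := by
    simp only [mulVec, dotProduct, Pmat, sum_mul, mul_sum, mul_assoc]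
    exact sum_comm
  simp only [actionValue, rvec, hP, mul_add, sum_add_distrib, mul_sum, mul_left_comm]

lemma one_sub_smul_Pmat_mulVec_V (m : MDP S A) (hπ : IsPolicy π) :
    (1 - m.γ • m.Pmat π) *ᵥ m.V π = m.rvec π := by
  have hunit := isUnit_one_sub_smul (m.Pmat_mem_rowStochastic hπ) m.γ_nonneg m.γ_lt_one
  rw [V, mulVec_mulVec, mul_nonsing_inv _ ((isUnit_iff_isUnit_det _).1 hunit), one_mulVec]

lemma V_eq_sum_mul_actionValue (m : MDP S A) (hπ : IsPolicy π) (s : Fin S) :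
    m.V π s = ∑ a, π s a * m.actionValue (m.V π) s a := by
  rw [sum_mul_actionValue, ← one_sub_smul_Pmat_mulVec_V m hπ, one_sub_smul_mulVec_apply,
    sub_add_cancel]

lemma le_V_of_le_sum_mul_actionValue (hπ : IsPolicy π) {U : Fin S → ℝ}
    (hU : ∀ s, U s ≤ ∑ a, π s a * m.actionValue U s a) : U ≤ m.V π := by
  refine le_of_one_sub_smul_mulVec_le (m.Pmat_mem_rowStochastic hπ) m.γ_nonneg m.γ_lt_one
    fun s => ?_
  rw [one_sub_smul_Pmat_mulVec_V m hπ, one_sub_smul_mulVec_apply, sub_le_iff_le_add,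
    ← sum_mul_actionValue]
  exact hU s

end PolicyValue

section Deviation

variable {m : MDP S A} {π : Fin S → Fin A → ℝ} {s : Fin S} {a : Fin A} {ε : ℝ}

lemma sum_devPolicy_mul_self (π : Fin S → Fin A → ℝ) (s : Fin S) (a : Fin A) (f : Fin A → ℝ) :
    ∑ b, devPolicy π s a s b * f b = f a := by
  simp [devPolicy]

lemma devPolicy_of_ne (π : Fin S → Fin A → ℝ) {s t : Fin S} (a : Fin A) (h : t ≠ s) :
    devPolicy π s a t = π t :=
  funext fun _ => if_neg h

lemma IsPolicy.devPolicy (hπ : IsPolicy π) (s : Fin S) (a : Fin A) :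
    IsPolicy (devPolicy π s a) := by
  refine ⟨fun t b => ?_, fun t => ?_⟩
  · unfold MDP.devPolicy
    split_ifs
    exacts [zero_le_one, le_rfl, hπ.1 t b]
  · obtain rfl | hts := eq_or_ne t s
    · simpa only [mul_one] using sum_devPolicy_mul_self π t a fun _ => 1
    · rw [devPolicy_of_ne π a hts, hπ.2 t]

lemma V_le_V_devPolicy (hπ : IsPolicy π) (h : m.V π s ≤ m.actionValue (m.V π) s a) :
    m.V π ≤ m.V (devPolicy π s a) := by
  refine le_V_of_le_sum_mul_actionValue (hπ.devPolicy s a) fun t => ?_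
  obtain rfl | hts := eq_or_ne t s
  · rwa [sum_devPolicy_mul_self]
  · rw [devPolicy_of_ne π a hts, ← V_eq_sum_mul_actionValue m hπ]

lemma actionValue_le_V_devPolicy (hπ : IsPolicy π) (h : m.V π s ≤ m.actionValue (m.V π) s a) :
    m.actionValue (m.V π) s a ≤ m.V (devPolicy π s a) s :=
  calc m.actionValue (m.V π) s a
      ≤ m.actionValue (m.V (devPolicy π s a)) s a :=
        m.actionValue_mono s a (V_le_V_devPolicy hπ h)
    _ = m.V (devPolicy π s a) s := by
        rw [V_eq_sum_mul_actionValue m (hπ.devPolicy s a) s, sum_devPolicy_mul_self]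

lemma actionValue_le_V_add (hπ : IsPolicy π)
    (hdev : max 0 (m.V (devPolicy π s a) s - m.V π s) ≤ ε) :
    m.actionValue (m.V π) s a ≤ m.V π s + ε := by
  obtain ⟨hε, hgain⟩ := max_le_iff.1 hdev
  obtain h | h := le_total (m.V π s) (m.actionValue (m.V π) s a)
  · linarith [actionValue_le_V_devPolicy hπ h]
  · linarith

lemma sub_le_of_actionValue_le_add {U W : Fin S → ℝ} (hU : ∀ s, ∃ a, U s ≤ m.actionValue U s a)
    (hW : ∀ s a, m.actionValue W s a ≤ W s + ε) (s : Fin S) :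
    U s - W s ≤ ε / (1 - m.γ) := by
  choose f hf using hU
  have hstoch : Matrix.of (fun t => m.P t (f t)) ∈ Matrix.rowStochastic ℝ (Fin S) :=
    Matrix.mem_rowStochastic_iff_sum.2
      ⟨fun t => m.P_nonneg t (f t), fun t => m.P_sum_one t (f t)⟩
  refine le_div_one_sub_of_le_add_mul_mulVec hstoch m.γ_nonneg m.γ_lt_one
    (v := fun t => U t - W t) (fun t => ?_) s
  calc U t - W t ≤ ε + (m.actionValue U t (f t) - m.actionValue W t (f t)) := by
        linarith [hf t, hW t (f t)]
    _ = ε + m.γ * ∑ u, m.P t (f t) u * (U u - W u) := by rw [actionValue_sub_actionValue]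

end Deviation

/-- Besides `V*`, the value function of any policy satisfies the hypothesis on `U`. -/
theorem approx_optimal_of_one_step_general (m : MDP S A)
    (π : Fin S → Fin A → ℝ) (hπ : IsPolicy π) (ε : ℝ)
    (hdev : ∀ s a, max 0 (m.V (devPolicy π s a) s - m.V π s) ≤ ε)
    (U : Fin S → ℝ) (hU : ∀ s, ∃ a, U s ≤ m.actionValue U s a) :
    ∀ s, U s - m.V π s ≤ ε / (1 - m.γ) :=
  sub_le_of_actionValue_le_add hU fun s a => actionValue_le_V_add hπ (hdev s a)

/-- if one-step deviations improve the value of `π` by at most `ε`,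
then `π` is `ε/(1−γ)`-approximately optimal: `V*(s) − V^π(s) ≤ ε/(1−γ)` where `V*`
is the (unique) solution of the Bellman optimality equation. -/
theorem approx_optimal_of_one_step (m : MDP S A) (hA : 0 < A)
    (π : Fin S → Fin A → ℝ) (hπ : IsPolicy π)
    (ε : ℝ) (hε : 0 < ε)
    (hdev : ∀ s a, max 0 (m.V (devPolicy π s a) s - m.V π s) ≤ ε)
    (Vstar : Fin S → ℝ)
    (hstar : ∀ s, Vstar s =
      Finset.univ.sup' (Finset.univ_nonempty_iff.mpr ⟨⟨0, hA⟩⟩)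
        (fun a => m.r s a + m.γ * ∑ s', m.P s a s' * Vstar s')) :
    ∀ s, Vstar s - m.V π s ≤ ε / (1 - m.γ) := by
  refine approx_optimal_of_one_step_general m π hπ ε hdev Vstar fun s => ?_
  simpa only [mem_univ, true_and, actionValue] using (le_sup'_iff _).1 (hstar s).le

end MDP
end

section
/- Let π₁, π₂ be strategy profiles of a finite discounted stochastic game with ‖π₁ − π₂‖∞ ≤ δ. Then for all states s, s' ∈ 𝕊, |P^{π₁}(s'|s) − P^{π₂}(s'|s)| ≤ nA_max δ. -/
/-!
Since each `P(·|s,a)` is a probability distribution, averaging it against the joint action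
distribution is an `ℓ¹` contraction, so the rows of the two transition matrices are no further
apart in `ℓ¹` than the joint action distributions at `s`. Those are products over the agents.
Replacing the factors of one product by those of the other one agent at a time changes the product
at each step by at most the `ℓ¹` distance of the two factors exchanged, because the remaining
factors have mass at most one. Each of these `n` distances is a sum of at most `A_max` terms, each
at most `δ`.
-/

open Finset

theorem prod_update_apply_sub_prod {ι : Type*} [Fintype ι] [DecidableEq ι]
    {κ : ι → Type*} {R : Type*} [CommRing R] (p : ∀ i, κ i → R) (k : ι)
    (f : κ k → R) (a : ∀ i, κ i) :
    ∏ i, Function.update p k f i (a i) - ∏ i, p i (a i) =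
      ∏ i, Function.update p k (f - p k) i (a i) := by
  have split_factor (g : κ k → R) :
      ∏ i, Function.update p k g i (a i) = g (a k) * ∏ i ∈ univ \ {k}, p i (a i) := by
    simp only [Function.apply_update fun i (h : κ i → R) => h (a i)]
    exact prod_update_of_mem (mem_univ k) _ _
  have split_self := split_factor (p k)
  rw [Function.update_eq_self] at split_self
  rw [split_factor, split_factor, split_self, Pi.sub_apply, sub_mul]

section ProductWeights

variable {ι : Type*} [Fintype ι] [DecidableEq ι] {κ : ι → Type*} [∀ i, Fintype (κ i)]
  {R : Type*} [NormedCommRing R]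

theorem sum_norm_prod_le_prod_sum_norm [Nonempty ι] (p : ∀ i, κ i → R) :
    ∑ a : ∀ i, κ i, ‖∏ i, p i (a i)‖ ≤ ∏ i, ∑ b, ‖p i b‖ := by
  rw [Fintype.prod_sum]
  exact sum_le_sum fun a _ => norm_prod_le' univ univ_nonempty fun i => p i (a i)

theorem sum_norm_prod_update_sub_prod_le (p : ∀ i, κ i → R) (k : ι)
    (hp : ∀ i ≠ k, ∑ b, ‖p i b‖ ≤ 1) (f : κ k → R) :
    ∑ a : ∀ i, κ i, ‖∏ i, Function.update p k f i (a i) - ∏ i, p i (a i)‖ ≤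
      ∑ b, ‖f b - p k b‖ := by
  have : Nonempty ι := ⟨k⟩
  simp only [prod_update_apply_sub_prod]
  refine (sum_norm_prod_le_prod_sum_norm _).trans ?_
  rw [Fintype.prod_eq_mul_prod_compl k, Function.update_self]
  refine mul_le_of_le_one_right (sum_nonneg fun _ _ => norm_nonneg _) ?_
  refine prod_le_one (fun _ _ => sum_nonneg fun _ _ => norm_nonneg _) fun i hi => ?_
  have hik : i ≠ k := by simpa using hi
  rw [Function.update_of_ne hik]
  exact hp i hik

theorem sum_norm_prod_piecewise_sub_prod_le (p q : ∀ i, κ i → R)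
    (hp : ∀ i, ∑ b, ‖p i b‖ ≤ 1) (hq : ∀ i, ∑ b, ‖q i b‖ ≤ 1) (t : Finset ι) :
    ∑ a : ∀ i, κ i, ‖∏ i, t.piecewise p q i (a i) - ∏ i, q i (a i)‖ ≤
      ∑ i ∈ t, ∑ b, ‖p i b - q i b‖ := by
  induction t using Finset.induction_on with
  | empty => simp
  | insert k t hk ih =>
    have hybrid_le_one (i : ι) : ∑ b, ‖t.piecewise p q i b‖ ≤ 1 :=
      t.piecewise_cases p q (fun w => ∑ b, ‖w b‖ ≤ 1) (hp i) (hq i)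
    have swap_le := sum_norm_prod_update_sub_prod_le (t.piecewise p q) k
      (fun i _ => hybrid_le_one i) (p k)
    rw [piecewise_eq_of_notMem t p q hk] at swap_le
    rw [piecewise_insert, sum_insert hk]
    refine (sum_le_sum fun a _ => norm_sub_le_norm_sub_add_norm_sub _
      (∏ i, t.piecewise p q i (a i)) _).trans ?_
    rw [sum_add_distrib]
    exact add_le_add swap_le ih

theorem sum_norm_prod_sub_prod_le (p q : ∀ i, κ i → R)
    (hp : ∀ i, ∑ b, ‖p i b‖ ≤ 1) (hq : ∀ i, ∑ b, ‖q i b‖ ≤ 1) :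
    ∑ a : ∀ i, κ i, ‖∏ i, p i (a i) - ∏ i, q i (a i)‖ ≤ ∑ i, ∑ b, ‖p i b - q i b‖ := by
  simpa only [piecewise_univ] using sum_norm_prod_piecewise_sub_prod_le p q hp hq univ

end ProductWeights

namespace SG

variable {n S : ℕ} {A : Fin n → ℕ} {π π₁ π₂ : Profile n S A}

theorem le_Amax (i : Fin n) : A i ≤ Amax A :=
  le_sup (mem_univ i)

theorem sum_abs_le_Amax_mul {i : Fin n} [Nonempty (Fin (A i))] {w : Fin (A i) → ℝ} {δ : ℝ}
    (hw : ∀ a, |w a| ≤ δ) : ∑ a, |w a| ≤ Amax A * δ := by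
  have δ_nonneg : 0 ≤ δ := (abs_nonneg _).trans (hw (Classical.arbitrary _))
  calc ∑ a, |w a| ≤ A i * δ := by simpa using sum_le_card_nsmul univ _ δ fun a _ => hw a
    _ ≤ Amax A * δ := by
        gcongr
        exact le_Amax i

theorem IsProfile.sum_abs_eq_one (h : IsProfile π) (i : Fin n) (s : Fin S) :
    ∑ a, |π i s a| = 1 := by
  simp only [abs_of_nonneg (h.1 i s _), h.2 i s]

theorem IsProfile.nonempty_action (h : IsProfile π) (i : Fin n) (s : Fin S) :
    Nonempty (Fin (A i)) :=
  univ_nonempty_iff.mp <| nonempty_of_sum_ne_zero <| (h.2 i s).trans_ne one_ne_zero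

theorem sum_abs_Pmat_sub_le_sum_abs_jointProb_sub (g : SG n S A) (π₁ π₂ : Profile n S A)
    (s : Fin S) :
    ∑ s', |g.Pmat π₁ s s' - g.Pmat π₂ s s'| ≤ ∑ a, |jointProb π₁ s a - jointProb π₂ s a| :=
  calc ∑ s', |g.Pmat π₁ s s' - g.Pmat π₂ s s'|
      = ∑ s', |∑ a, (jointProb π₁ s a - jointProb π₂ s a) * g.P s a s'| := by
        simp only [Pmat, ← sum_sub_distrib, sub_mul]
    _ ≤ ∑ s', ∑ a, |jointProb π₁ s a - jointProb π₂ s a| * g.P s a s' := by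
        refine sum_le_sum fun s' _ => (abs_sum_le_sum_abs _ _).trans_eq ?_
        simp only [abs_mul, abs_of_nonneg (g.P_nonneg s _ s')]
    _ = ∑ a, |jointProb π₁ s a - jointProb π₂ s a| := by
        rw [sum_comm]
        simp only [← mul_sum, g.P_sum_one, mul_one]

theorem IsProfile.sum_abs_jointProb_sub_le (h₁ : IsProfile π₁) (h₂ : IsProfile π₂) (s : Fin S) :
    ∑ a, |jointProb π₁ s a - jointProb π₂ s a| ≤ ∑ i, ∑ b, |π₁ i s b - π₂ i s b| :=
  sum_norm_prod_sub_prod_le (fun i => π₁ i s) (fun i => π₂ i s)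
    (fun i => (h₁.sum_abs_eq_one i s).le) (fun i => (h₂.sum_abs_eq_one i s).le)

end SG

open SG in
theorem abs_Pmat_diff_le_general {n S : ℕ} {A : Fin n → ℕ} (g : SG n S A)
    {π₁ π₂ : Profile n S A} (h₁ : IsProfile π₁) (h₂ : IsProfile π₂) {δ : ℝ} {s : Fin S}
    (hδ : ∀ i a, |π₁ i s a - π₂ i s a| ≤ δ) :
    ∑ s', |g.Pmat π₁ s s' - g.Pmat π₂ s s'| ≤ n * Amax A * δ :=
  calc ∑ s', |g.Pmat π₁ s s' - g.Pmat π₂ s s'|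
      ≤ ∑ a, |jointProb π₁ s a - jointProb π₂ s a| :=
        g.sum_abs_Pmat_sub_le_sum_abs_jointProb_sub π₁ π₂ s
    _ ≤ ∑ i, ∑ b, |π₁ i s b - π₂ i s b| := h₁.sum_abs_jointProb_sub_le h₂ s
    _ ≤ ∑ _i : Fin n, (Amax A : ℝ) * δ :=
        sum_le_sum fun i _ =>
          have := h₁.nonempty_action i s
          sum_abs_le_Amax_mul (hδ i)
    _ = n * Amax A * δ := by simp [mul_assoc]

open SG in
/-- `|P^{π₁}(s'|s) − P^{π₂}(s'|s)| ≤ n A_max δ`. -/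
theorem abs_Pmat_diff_le {n S : ℕ} {A : Fin n → ℕ} (g : SG n S A)
    (π₁ π₂ : Profile n S A) (h₁ : IsProfile π₁) (h₂ : IsProfile π₂)
    (δ : ℝ) (hδ : ∀ i s a, |π₁ i s a - π₂ i s a| ≤ δ) :
    ∀ s s' : Fin S, |g.Pmat π₁ s s' - g.Pmat π₂ s s'| ≤ (n : ℝ) * (Amax A : ℝ) * δ := by
  intro s s'
  exact (single_le_sum (fun _ _ => abs_nonneg _) (mem_univ s')).trans <|
    abs_Pmat_diff_le_general g h₁ h₂ fun i => hδ i s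
end
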